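/- Let α ∈ (1, 2) and β ∈ [−1, 1]. For every x ∈ ℝ, ∫₀^∞ [ (1 − cos(λ x)) + β · tan(π α / 2) · sin(λ x) ] / λ^α dλ = −Γ(1 − α) · sin(π α / 2) · (1 − β · sgn(x)) · |x|^{α − 1}. (This identity evaluates, up to a positive normalizing constant, the renormalized zero resolvent h(x) = (1/K(α))(1 − β sgn(x))|x|^{α−1} of a strictly α-stable Lévy process with positivity asymmetry parameter β.) -/

import Mathlib

open MeasureTheory Real

open Filter Topology Set

lemma aux_norm_le {z : ℂ} (hz : 0 ≤ z.re) {l : ℝ} (hl : 0 < l) :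
    ‖1 - Complex.exp (-z * l)‖ ≤ 2 ∧ ‖1 - Complex.exp (-z * l)‖ ≤ 2 * ‖z‖ * l := by
  have h2 : ‖1 - Complex.exp (-z * l)‖ ≤ 2 := by
    refine (norm_sub_le _ _).trans ?_
    rw [Complex.norm_exp]
    have : (-z * l).re ≤ 0 := by
      simp only [Complex.mul_re, Complex.neg_re, Complex.ofReal_re, Complex.ofReal_im]
      nlinarith [mul_nonneg hz hl.le]
    have := Real.exp_le_one_iff.2 this
    simp only [norm_one]
    linarith
  refine ⟨h2, ?_⟩
  have hn : ‖-z * l‖ = ‖z‖ * l := by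
    rw [norm_mul, norm_neg, Complex.norm_real, Real.norm_of_nonneg hl.le]
  by_cases h : ‖-z * l‖ ≤ 1
  · have := Complex.norm_exp_sub_one_le h
    rw [norm_sub_rev, mul_assoc, ← hn]
    exact this
  · rw [hn] at h
    push Not at h
    linarith

noncomputable def auxG (α l : ℝ) : ℝ := if l ≤ 1 then l ^ (1 - α) else l ^ (-α)

lemma auxG_int {α : ℝ} (hα : α ∈ Ioo (1 : ℝ) 2) : IntegrableOn (auxG α) (Ioi 0) := by
  rw [← Ioc_union_Ioi_eq_Ioi (zero_le_one (α := ℝ)), integrableOn_union]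
  constructor
  · have : IntegrableOn (fun l : ℝ => l ^ (1 - α)) (Ioc 0 1) := by
      rw [← intervalIntegrable_iff_integrableOn_Ioc_of_le zero_le_one]
      exact intervalIntegral.intervalIntegrable_rpow' (by linarith [hα.2])
    refine this.congr_fun (fun l hl => ?_) measurableSet_Ioc
    simp [auxG, hl.2]
  · have : IntegrableOn (fun l : ℝ => l ^ (-α)) (Ioi 1) :=
      integrableOn_Ioi_rpow_of_lt (by linarith [hα.1]) zero_lt_one
    refine this.congr_fun (fun l hl => ?_) measurableSet_Ioi
    simp [auxG, not_le.2 (mem_Ioi.1 hl)]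

noncomputable def auxF (α : ℝ) (z : ℂ) (l : ℝ) : ℂ :=
  (1 - Complex.exp (-z * l)) * ((l ^ (-α) : ℝ) : ℂ)

lemma auxF_meas (α : ℝ) (z : ℂ) : Measurable (auxF α z) := by
  unfold auxF
  fun_prop

lemma auxF_bound (α : ℝ) {z : ℂ} (hz : 0 ≤ z.re) {M : ℝ} (hM : ‖z‖ ≤ M) {l : ℝ} (hl : 0 < l) :
    ‖auxF α z l‖ ≤ 2 * (M + 1) * auxG α l := by
  obtain ⟨h1, h2⟩ := aux_norm_le hz hl
  have hp : 0 < l ^ (-α) := rpow_pos_of_pos hl _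
  have hz0 := norm_nonneg z
  rw [auxF, norm_mul, Complex.norm_real, Real.norm_of_nonneg hp.le]
  unfold auxG
  split_ifs with h
  · have : l ^ (1 - α) = l * l ^ (-α) := by
      rw [sub_eq_add_neg, rpow_add hl, rpow_one]
    rw [this, ← mul_assoc]
    refine mul_le_mul_of_nonneg_right (h2.trans ?_) hp.le
    refine mul_le_mul_of_nonneg_right ?_ hl.le
    linarith
  · refine mul_le_mul_of_nonneg_right (h1.trans ?_) hp.le
    linarith

lemma auxF_int {α : ℝ} (hα : α ∈ Ioo (1 : ℝ) 2) {z : ℂ} (hz : 0 ≤ z.re) :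
    IntegrableOn (auxF α z) (Ioi 0) := by
  refine Integrable.mono' ((auxG_int hα).const_mul (2 * (‖z‖ + 1)))
    (auxF_meas α z).aestronglyMeasurable ?_
  filter_upwards [ae_restrict_mem measurableSet_Ioi] with l hl
  exact auxF_bound α hz le_rfl hl

lemma aux_real {α : ℝ} (hα : α ∈ Ioo (1 : ℝ) 2) {r : ℝ} (hr : 0 < r) :
    ∫ l in Ioi (0 : ℝ), (1 - Real.exp (-r * l)) * l ^ (-α) = -Real.Gamma (1 - α) * r ^ (α - 1) := by
  obtain ⟨h1, h2⟩ := hα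
  have hne : 1 - α ≠ 0 := by linarith
  have hb : ∀ l : ℝ, 0 < l → |1 - Real.exp (-r * l)| ≤ 2 ∧ |1 - Real.exp (-r * l)| ≤ 2 * r * l := by
    intro l hl
    have := aux_norm_le (z := (r : ℂ)) (by simpa using hr.le) hl
    have e : (1 : ℂ) - Complex.exp (-(r : ℂ) * l) = ((1 - Real.exp (-r * l) : ℝ) : ℂ) := by
      push_cast; rfl
    rw [e, Complex.norm_real, Complex.norm_real, Real.norm_eq_abs, Real.norm_of_nonneg hr.le] at this
    exact this
  have hi : IntegrableOn (fun l : ℝ => l ^ (1 - α) * Real.exp (-r * l)) (Ioi 0) := by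
    have := integrableOn_rpow_mul_exp_neg_mul_rpow (p := 1) (s := 1 - α) (b := r) (by linarith)
      one_pos hr
    simpa using this
  have key := integral_Ioi_mul_deriv_eq_deriv_mul (a := (0 : ℝ)) (a' := (0 : ℝ)) (b' := (0 : ℝ))
    (u := fun l : ℝ => 1 - Real.exp (-r * l)) (v := fun l : ℝ => l ^ (1 - α) / (1 - α))
    (u' := fun l : ℝ => r * Real.exp (-r * l)) (v' := fun l : ℝ => l ^ (-α))
    (by
      intro l _
      have := (((hasDerivAt_id l).const_mul (-r)).exp).const_sub 1
      refine this.congr_deriv ?_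
      simp only [id]
      ring)
    (by
      intro l hl
      have := (Real.hasDerivAt_rpow_const (x := l) (p := 1 - α) (Or.inl (ne_of_gt hl))).div_const
        (1 - α)
      convert this using 1
      rw [mul_div_assoc, mul_div_cancel₀]
      · congr 1; ring
      · exact hne)
    (by
      have := (auxF_int ⟨h1, h2⟩ (z := (r : ℂ)) (by simpa using hr.le)).re
      refine this.congr (ae_of_all _ fun l => ?_)
      have e : auxF α r l = (((1 - Real.exp (-r * l)) * l ^ (-α) : ℝ) : ℂ) := by
        unfold auxF; push_cast; rfl
      simp only [e, RCLike.re_to_complex, Complex.ofReal_re, Pi.mul_apply])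
    (by
      refine (hi.const_mul (r / (1 - α))).congr (ae_of_all _ fun l => ?_)
      simp only [Pi.mul_apply]
      ring)
    (by
      have t : Tendsto (fun l : ℝ => 2 * r / |1 - α| * l ^ (2 - α)) (𝓝[>] 0) (𝓝 0) := by
        have := (Real.continuousAt_rpow_const 0 (2 - α) (Or.inr (by linarith))).tendsto
        rw [Real.zero_rpow (by linarith)] at this
        simpa using (this.mono_left nhdsWithin_le_nhds).const_mul (2 * r / |1 - α|)
      refine squeeze_zero_norm' ?_ t
      filter_upwards [self_mem_nhdsWithin] with l hl
      have hl : 0 < l := hl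
      have hp : 0 < l ^ (1 - α) := rpow_pos_of_pos hl _
      have e : l ^ (2 - α) = l * l ^ (1 - α) := by
        rw [show 2 - α = 1 + (1 - α) by ring, rpow_add hl, rpow_one]
      simp only [Pi.mul_apply, norm_mul, norm_div, Real.norm_eq_abs, abs_of_pos hp]
      rw [e]
      calc _ ≤ 2 * r * l * (l ^ (1 - α) / |1 - α|) :=
            mul_le_mul_of_nonneg_right (hb l hl).2 (by positivity)
        _ = _ := by ring)
    (by
      have t : Tendsto (fun l : ℝ => 2 / |1 - α| * l ^ (-(α - 1))) atTop (𝓝 0) := by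
        simpa using (tendsto_rpow_neg_atTop (y := α - 1) (by linarith)).const_mul (2 / |1 - α|)
      refine squeeze_zero_norm' ?_ t
      filter_upwards [eventually_gt_atTop 0] with l hl
      have hp : 0 < l ^ (1 - α) := rpow_pos_of_pos hl _
      simp only [Pi.mul_apply, norm_mul, norm_div, Real.norm_eq_abs, abs_of_pos hp]
      rw [neg_sub]
      calc _ ≤ 2 * (l ^ (1 - α) / |1 - α|) :=
            mul_le_mul_of_nonneg_right (hb l hl).1 (by positivity)
        _ = _ := by ring)
  rw [key]
  have e : ∫ l in Ioi (0 : ℝ), r * Real.exp (-r * l) * (l ^ (1 - α) / (1 - α))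
      = r / (1 - α) * ((1 / r) ^ (2 - α) * Real.Gamma (2 - α)) := by
    rw [← Real.integral_rpow_mul_exp_neg_mul_Ioi (by linarith) hr, ← integral_const_mul]
    refine integral_congr_ae (ae_of_all _ fun l => ?_)
    simp only
    rw [show 2 - α - 1 = 1 - α by ring, neg_mul]
    ring
  rw [e, show 2 - α = (1 - α) + 1 by ring, Real.Gamma_add_one hne, one_div, inv_rpow hr.le,
    ← rpow_neg hr.le, show α - 1 = 1 + -(1 - α + 1) by ring, rpow_add hr 1, rpow_one]
  field_simp
  ring_nf

lemma aux_diff {α : ℝ} (hα : α ∈ Ioo (1 : ℝ) 2) {z : ℂ} (hz : 0 < z.re) :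
    DifferentiableAt ℂ (fun z => ∫ l in Ioi (0 : ℝ), auxF α z l) z := by
  have hs : {w : ℂ | z.re / 2 < w.re} ∈ 𝓝 z :=
    (isOpen_lt continuous_const Complex.continuous_re).mem_nhds (by
      simp only [mem_ofPred_eq]; linarith)
  have hi : IntegrableOn (fun l : ℝ => l ^ (1 - α) * Real.exp (-(z.re / 2) * l)) (Ioi 0) := by
    have := integrableOn_rpow_mul_exp_neg_mul_rpow (p := 1) (s := 1 - α) (b := z.re / 2)
      (by linarith [hα.2]) one_pos (by linarith)
    simpa using this
  refine (hasDerivAt_integral_of_dominated_loc_of_deriv_le (F := auxF α)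
    (F' := fun w l => l * Complex.exp (-w * l) * ((l ^ (-α) : ℝ) : ℂ)) hs
    (Eventually.of_forall fun w => (auxF_meas α w).aestronglyMeasurable) (auxF_int hα hz.le)
    (by
      refine Measurable.aestronglyMeasurable ?_
      fun_prop)
    ?_ hi ?_).2.differentiableAt
  · filter_upwards [ae_restrict_mem measurableSet_Ioi] with l hl w hw
    have hl : 0 < l := hl
    have hw : z.re / 2 < w.re := hw
    rw [norm_mul, norm_mul, Complex.norm_real, Complex.norm_real, Complex.norm_exp,
      Real.norm_of_nonneg hl.le, Real.norm_of_nonneg (rpow_pos_of_pos hl _).le,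
      sub_eq_add_neg, rpow_add hl, rpow_one]
    have : Real.exp (-w * l).re ≤ Real.exp (-(z.re / 2) * l) := by
      apply Real.exp_le_exp.2
      simp only [Complex.mul_re, Complex.neg_re, Complex.ofReal_re, Complex.ofReal_im]
      nlinarith
    have hp := rpow_pos_of_pos hl (-α)
    calc l * Real.exp (-w * l).re * l ^ (-α) = l * l ^ (-α) * Real.exp (-w * l).re := by ring
      _ ≤ _ := mul_le_mul_of_nonneg_left this (by positivity)
  · filter_upwards with l w _
    have := ((((hasDerivAt_id w).neg.mul_const (l : ℂ)).cexp).const_sub 1).mul_const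
      ((l ^ (-α) : ℝ) : ℂ)
    refine this.congr_deriv ?_
    simp only [Pi.neg_apply, id]
    ring

lemma aux_half {α : ℝ} (hα : α ∈ Ioo (1 : ℝ) 2) {z : ℂ} (hz : 0 < z.re) :
    ∫ l in Ioi (0 : ℝ), auxF α z l = -Real.Gamma (1 - α) * z ^ ((α - 1 : ℝ) : ℂ) := by
  have hU : IsOpen {w : ℂ | 0 < w.re} := isOpen_lt continuous_const Complex.continuous_re
  have hf : AnalyticOnNhd ℂ (fun z => ∫ l in Ioi (0 : ℝ), auxF α z l) {w : ℂ | 0 < w.re} :=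
    DifferentiableOn.analyticOnNhd (fun w hw => (aux_diff hα hw).differentiableWithinAt) hU
  have hg : AnalyticOnNhd ℂ (fun z : ℂ => -(Real.Gamma (1 - α) : ℂ) * z ^ ((α - 1 : ℝ) : ℂ))
      {w : ℂ | 0 < w.re} := by
    refine DifferentiableOn.analyticOnNhd (fun w hw => ?_) hU
    refine DifferentiableAt.differentiableWithinAt ?_
    exact (differentiableAt_id.cpow_const (Or.inl hw)).const_mul _
  refine hf.eqOn_of_preconnected_of_frequently_eq hg (convex_halfSpace_re_gt 0).isPreconnected
    (z₀ := 1) (by simp) ?_ hz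
  have ht : Tendsto (fun r : ℝ => (r : ℂ)) (𝓝[>] 1) (𝓝[≠] 1) := by
    refine tendsto_nhdsWithin_iff.2 ⟨?_, ?_⟩
    · have : Tendsto (fun r : ℝ => (r : ℂ)) (𝓝 1) (𝓝 1) := by
        simpa using (Complex.continuous_ofReal.tendsto (1 : ℝ))
      exact this.mono_left nhdsWithin_le_nhds
    · filter_upwards [self_mem_nhdsWithin] with r hr
      have : (1 : ℝ) < r := hr
      simp only [mem_compl_iff, mem_singleton_iff]
      exact_mod_cast this.ne'
  refine ht.frequently (Eventually.frequently ?_)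
  filter_upwards [self_mem_nhdsWithin] with r hr
  have hr : (1 : ℝ) < r := hr
  have hr0 : 0 < r := by linarith
  have e : ∀ l, auxF α r l = (((1 - Real.exp (-r * l)) * l ^ (-α) : ℝ) : ℂ) := by
    intro l; unfold auxF; push_cast; rfl
  simp only [e]
  rw [integral_complex_ofReal, aux_real hα hr0, Complex.ofReal_mul, Complex.ofReal_cpow hr0.le]
  simp

lemma aux_imag {α : ℝ} (hα : α ∈ Ioo (1 : ℝ) 2) {x : ℝ} (hx : 0 < x) :
    ∫ l in Ioi (0 : ℝ), auxF α (x * Complex.I) l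
      = -Real.Gamma (1 - α) * (x * Complex.I) ^ ((α - 1 : ℝ) : ℂ) := by
  have hre : ∀ e : ℝ, ((e : ℂ) + x * Complex.I).re = e := by intro e; simp
  have hc : Tendsto (fun e : ℝ => (e : ℂ) + x * Complex.I) (𝓝[>] 0) (𝓝 (x * Complex.I)) := by
    have : Continuous (fun e : ℝ => (e : ℂ) + x * Complex.I) := by fun_prop
    have := this.tendsto 0
    simp only [Complex.ofReal_zero, zero_add] at this
    exact this.mono_left nhdsWithin_le_nhds
  have h1 : Tendsto (fun e : ℝ => ∫ l in Ioi (0 : ℝ), auxF α (e + x * Complex.I) l) (𝓝[>] 0)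
      (𝓝 (∫ l in Ioi (0 : ℝ), auxF α (x * Complex.I) l)) := by
    refine tendsto_integral_filter_of_dominated_convergence
      (fun l => 2 * (‖(x * Complex.I : ℂ)‖ + 1 + 1) * auxG α l)
      (Eventually.of_forall fun e => (auxF_meas α _).aestronglyMeasurable) ?_
      ((auxG_int hα).const_mul _) ?_
    · have hn := hc.norm.eventually (gt_mem_nhds (lt_add_one ‖(x * Complex.I : ℂ)‖))
      filter_upwards [self_mem_nhdsWithin, hn] with e he hn
      filter_upwards [ae_restrict_mem measurableSet_Ioi] with l hl
      exact auxF_bound α (by rw [hre]; exact le_of_lt he) hn.le hl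
    · filter_upwards with l
      have : Continuous (fun z => auxF α z l) := by unfold auxF; fun_prop
      exact (this.tendsto _).comp hc
  have h2 : Tendsto (fun e : ℝ => ∫ l in Ioi (0 : ℝ), auxF α (e + x * Complex.I) l) (𝓝[>] 0)
      (𝓝 (-Real.Gamma (1 - α) * (x * Complex.I) ^ ((α - 1 : ℝ) : ℂ))) := by
    have hs : (x * Complex.I : ℂ) ∈ Complex.slitPlane := Or.inr (by simpa using hx.ne')
    have := ((continuousAt_id.cpow (continuousAt_const (y := ((α - 1 : ℝ) : ℂ))) hs).tendsto.comp hc).const_mul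
      (-(Real.Gamma (1 - α) : ℂ))
    refine this.congr' ?_
    filter_upwards [self_mem_nhdsWithin] with e he
    rw [aux_half hα (by rw [hre]; exact he)]
    rfl
  exact tendsto_nhds_unique h1 h2

lemma aux_cpow {α x : ℝ} (hx : 0 < x) : (x * Complex.I : ℂ) ^ ((α - 1 : ℝ) : ℂ)
    = ((x ^ (α - 1) * Real.sin (π * α / 2) : ℝ) : ℂ)
      + ((-(x ^ (α - 1) * Real.cos (π * α / 2)) : ℝ) : ℂ) * Complex.I := by
  have hx0 : (x : ℂ) ≠ 0 := by exact_mod_cast hx.ne'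
  have hI : (x * Complex.I : ℂ) ^ ((α - 1 : ℝ) : ℂ) = (x : ℂ) ^ ((α - 1 : ℝ) : ℂ) *
      Complex.exp (((π * α / 2 - π / 2 : ℝ) : ℂ) * Complex.I) := by
    rw [Complex.cpow_def_of_ne_zero (mul_ne_zero hx0 Complex.I_ne_zero),
      Complex.cpow_def_of_ne_zero hx0, Complex.log_ofReal_mul hx Complex.I_ne_zero, Complex.log_I,
      ← Complex.exp_add, Complex.ofReal_log hx.le]
    congr 1
    push_cast
    ring
  rw [hI, Complex.exp_mul_I, ← Complex.ofReal_cos,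
    ← Complex.ofReal_sin, Real.cos_sub_pi_div_two, Real.sin_sub_pi_div_two,
    ← Complex.ofReal_cpow hx.le]
  push_cast
  ring

lemma auxF_re (α x : ℝ) (l : ℝ) :
    (auxF α (x * Complex.I) l).re = (1 - Real.cos (l * x)) * l ^ (-α) ∧
    (auxF α (x * Complex.I) l).im = Real.sin (l * x) * l ^ (-α) := by
  have : auxF α (x * Complex.I) l = ((1 - Real.cos (l * x)) * l ^ (-α) : ℝ)
      + ((Real.sin (l * x) * l ^ (-α) : ℝ) : ℂ) * Complex.I := by
    unfold auxF
    rw [show -(x * Complex.I : ℂ) * l = ((-(l * x) : ℝ) : ℂ) * Complex.I by push_cast; ring,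
      Complex.exp_mul_I, ← Complex.ofReal_cos, ← Complex.ofReal_sin, Real.cos_neg, Real.sin_neg]
    push_cast
    ring
  rw [this]
  simp [-Complex.ofReal_mul, -Complex.ofReal_sub]

lemma aux_pos {α : ℝ} (hα : α ∈ Ioo (1 : ℝ) 2) (c : ℝ) {x : ℝ} (hx : 0 < x) :
    ∫ l in Ioi (0 : ℝ), ((1 - Real.cos (l * x)) + c * Real.sin (l * x)) / l ^ α
      = -Real.Gamma (1 - α) * x ^ (α - 1) * (Real.sin (π * α / 2) - c * Real.cos (π * α / 2)) := by
  have hi := auxF_int hα (z := x * Complex.I) (by simp)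
  have h := aux_imag hα hx
  rw [aux_cpow hx] at h
  have h1 := congrArg Complex.re h
  have h2 := congrArg Complex.im h
  have e1 : (∫ l in Ioi (0 : ℝ), auxF α (x * Complex.I) l).re
      = ∫ l in Ioi (0 : ℝ), (auxF α (x * Complex.I) l).re := (integral_re hi).symm
  have e2 : (∫ l in Ioi (0 : ℝ), auxF α (x * Complex.I) l).im
      = ∫ l in Ioi (0 : ℝ), (auxF α (x * Complex.I) l).im := (integral_im hi).symm
  rw [e1] at h1
  rw [e2] at h2
  have e : ∫ l in Ioi (0 : ℝ), ((1 - Real.cos (l * x)) + c * Real.sin (l * x)) / l ^ α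
      = (∫ l in Ioi (0 : ℝ), (auxF α (x * Complex.I) l).re)
        + c * ∫ l in Ioi (0 : ℝ), (auxF α (x * Complex.I) l).im := by
    rw [← integral_const_mul]
    refine Eq.trans ?_ (integral_add hi.re (hi.im.const_mul c))
    refine setIntegral_congr_fun measurableSet_Ioi fun l hl => ?_
    change _ = (auxF α (x * Complex.I) l).re + c * (auxF α (x * Complex.I) l).im
    rw [(auxF_re α x l).1, (auxF_re α x l).2, rpow_neg (le_of_lt hl)]
    ring
  rw [e, h1, h2]
  simp [-Complex.ofReal_mul, -Complex.ofReal_neg, -Complex.ofReal_sin, -Complex.ofReal_cos]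
  ring


/-- For `α ∈ (1,2)`, `β ∈ [−1,1]` and every `x : ℝ`,
`∫₀^∞ [(1 − cos(λx)) + β·tan(πα/2)·sin(λx)]/λ^α dλ
  = −Γ(1 − α)·sin(πα/2)·(1 − β·sgn(x))·|x|^{α−1}`.
This evaluates, up to a positive normalizing constant, the renormalized zero resolvent
`h(x) = (1/K(α))(1 − β·sgn(x))|x|^{α−1}` of a strictly `α`-stable Lévy process with
positivity asymmetry parameter `β`. -/
theorem integral_stable_renormalized_resolvent (α β : ℝ) (hα : α ∈ Set.Ioo (1 : ℝ) 2)
    (hβ : β ∈ Set.Icc (-1 : ℝ) 1) (x : ℝ) :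
    ∫ l in Set.Ioi (0 : ℝ),
        ((1 - Real.cos (l * x)) + β * Real.tan (π * α / 2) * Real.sin (l * x)) / l ^ α
      = -Real.Gamma (1 - α) * Real.sin (π * α / 2) * (1 - β * Real.sign x) * |x| ^ (α - 1) := by

  have hcos : Real.cos (π * α / 2) ≠ 0 := by
    apply ne_of_lt
    apply Real.cos_neg_of_pi_div_two_lt_of_lt <;> nlinarith [Real.pi_pos, hα.1, hα.2]
  have ht : Real.tan (π * α / 2) * Real.cos (π * α / 2) = Real.sin (π * α / 2) :=
    Real.tan_mul_cos hcos
  rcases lt_trichotomy x 0 with hx | hx | hx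
  · have h := aux_pos hα (-(β * Real.tan (π * α / 2))) (neg_pos.2 hx)
    simp only [mul_neg, Real.cos_neg, Real.sin_neg, neg_mul, neg_neg] at h
    rw [h, Real.sign_of_neg hx, abs_of_neg hx, ← ht]
    ring
  · subst hx
    have : α - 1 ≠ 0 := by linarith [hα.1]
    simp [Real.zero_rpow this]
  · rw [aux_pos hα _ hx, Real.sign_of_pos hx, abs_of_pos hx, ← ht]
    ring
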